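/- (Askey–Wilson relations in the orphan case.) Let K be an algebraically closed field with char(K) = 2 and let s, s*, r be scalars in K. Let (A, A*) be the associated split pair of 4×4 matrices determined by the data θ = (0, s + 1, 1, s), θ* = (0, s* + 1, 1, s*), φ = (r, 1, r + s + s*), i.e., A is lower bidiagonal with diagonal entries 0, s + 1, 1, s and all subdiagonal entries equal to 1, and A* is upper bidiagonal with diagonal entries 0, s* + 1, 1, s* and superdiagonal entries r, 1, r + s + s*. Then (A, A*) satisfies the Askey–Wilson relations AW(0, 1, 1, s² + s, (s*)² + s*, s·s*, r·s, r·s*). -/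

import Mathlib

/-- A pair of square matrices satisfies the Askey–Wilson relations
`AW(β, γ, γs, ρ, ρs, ω, η, ηs)`. -/
def MatSatisfiesAW {K : Type*} [Field K] {n : ℕ}
    (A As : Matrix (Fin n) (Fin n) K) (β γ γs ρ ρs ω η ηs : K) : Prop :=
  A ^ 2 * As - β • (A * As * A) + As * A ^ 2 - γ • (A * As + As * A) - ρ • As =
      γs • (A ^ 2) + ω • A + η • (1 : Matrix (Fin n) (Fin n) K) ∧
  As ^ 2 * A - β • (As * A * As) + A * As ^ 2 - γs • (As * A + A * As) - ρs • A =
      γ • (As ^ 2) + ω • As + ηs • (1 : Matrix (Fin n) (Fin n) K)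

/-- The split pair of `(d+1) × (d+1)` matrices associated with data `θ, θs, φ`:
`A` is lower bidiagonal with diagonal `θ_0, …, θ_d` and subdiagonal entries `1`;
`As` is upper bidiagonal with diagonal `θs_0, …, θs_d` and superdiagonal entries
`φ_1, …, φ_d`. -/
def splitPair {K : Type*} [Field K] {d : ℕ} (θ θs φ : ℕ → K) :
    Matrix (Fin (d + 1)) (Fin (d + 1)) K × Matrix (Fin (d + 1)) (Fin (d + 1)) K :=
  (Matrix.of fun i j => if (i : ℕ) = j then θ i else if (j : ℕ) + 1 = i then 1 else 0,
   Matrix.of fun i j => if (i : ℕ) = j then θs i else if (i : ℕ) + 1 = j then φ j else 0)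

/-!
In the basis `e₀, …, e_d` on which `A` raises and `A*` lowers, the first Askey–Wilson relation at
`e_k` only involves `e_{k-1}, …, e_{k+2}`, so it follows from four families of scalar identities in
`θ, θ*, φ`. The two relations are exchanged by transposing and swapping `A` with `A*`, which swaps
`θ` with `θ*` and fixes `φ`. The orphan data are invariant under this swap together with `s ↔ s*`,
so only one relation needs checking. There, in characteristic 2, the recurrences for `θ` and `θ*`
read `θ_{k+2} = θ_k + 1`, and the quadratic identity holds because `x² + x` takes the same value at
all the consecutive sums `x = θ_k + θ_{k+1} ∈ {s, s + 1}`.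
-/

open Matrix

section Defect

variable {R S T : Type*} [CommRing R] [Ring S] [Algebra R S] [Ring T] [Algebra R T]

/-- The difference of the two sides of the first Askey–Wilson relation. The second relation is the
same expression with `A`, `B` and `γ`, `γs` exchanged. -/
def askeyWilsonDefect (A B : S) (β γ γs ρ ω η : R) : S :=
  A ^ 2 * B - β • (A * B * A) + B * A ^ 2 - γ • (A * B + B * A) - ρ • B -
    (γs • A ^ 2 + ω • A + η • 1)

theorem map_askeyWilsonDefect {F : Type*} [FunLike F S T] [AlgHomClass F R S T] (f : F)
    (A B : S) (β γ γs ρ ω η : R) :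
    f (askeyWilsonDefect A B β γ γs ρ ω η) = askeyWilsonDefect (f A) (f B) β γ γs ρ ω η := by
  simp only [askeyWilsonDefect, map_add, map_sub, map_mul, map_pow, map_smul, map_one]

theorem transpose_askeyWilsonDefect {n : Type*} [Fintype n] [DecidableEq n]
    (A B : Matrix n n R) (β γ γs ρ ω η : R) :
    (askeyWilsonDefect A B β γ γs ρ ω η)ᵀ = askeyWilsonDefect Aᵀ Bᵀ β γ γs ρ ω η := by
  simp only [askeyWilsonDefect, transpose_add, transpose_sub, transpose_smul, transpose_mul,
    transpose_pow, transpose_one, mul_assoc, add_comm (Bᵀ * Aᵀ)]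
  abel

theorem matSatisfiesAW_iff_askeyWilsonDefect_eq_zero {K : Type*} [Field K] {n : ℕ}
    {A B : Matrix (Fin n) (Fin n) K} {β γ γs ρ ρs ω η ηs : K} :
    MatSatisfiesAW A B β γ γs ρ ρs ω η ηs ↔
      askeyWilsonDefect A B β γ γs ρ ω η = 0 ∧ askeyWilsonDefect B A β γs γ ρs ω ηs = 0 := by
  simp only [MatSatisfiesAW, askeyWilsonDefect, sub_eq_zero]

end Defect

section SplitBasis

variable {R V : Type*} [CommRing R] [AddCommGroup V] [Module R V]

theorem askeyWilsonDefect_apply_splitBasis {A B : Module.End R V} {e : ℕ → V}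
    {θ θs a b : ℕ → R} (hA : ∀ k, A (e k) = θ k • e k + a (k + 1) • e (k + 1))
    (hB : ∀ k, B (e k) = θs k • e k + b k • e (k - 1)) (hb : b 0 = 0)
    (β γ γs ρ ω η : R) (k : ℕ) :
    askeyWilsonDefect A B β γ γs ρ ω η (e k) =
      (a (k + 1) * a (k + 2) * (θs k - β * θs (k + 1) + θs (k + 2) - γs)) • e (k + 2) +
      (a (k + 1) * ((θ k + θ (k + 1)) * (θs k + θs (k + 1)) -
        β * (θ k * θs k + θ (k + 1) * θs (k + 1)) - γ * (θs k + θs (k + 1)) -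
        γs * (θ k + θ (k + 1)) + a k * b k - β * (a (k + 1) * b (k + 1)) +
        a (k + 2) * b (k + 2) - ω)) • e (k + 1) +
      (2 * θ k ^ 2 * θs k - β * θ k ^ 2 * θs k - 2 * γ * θ k * θs k - ρ * θs k - γs * θ k ^ 2 -
        ω * θ k + a k * b k * (θ (k - 1) + θ k - β * θ k - γ) +
        a (k + 1) * b (k + 1) * (θ k + θ (k + 1) - β * θ k - γ) - η) • e k +
      (b k * (θ (k - 1) ^ 2 - β * θ (k - 1) * θ k + θ k ^ 2 - γ * (θ (k - 1) + θ k) - ρ)) •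
        e (k - 1) := by
  cases k <;>
  · simp only [askeyWilsonDefect, pow_two, LinearMap.sub_apply, LinearMap.add_apply,
      LinearMap.smul_apply, Module.End.mul_apply, Module.End.one_apply, map_add, map_smul, hA, hB,
      hb, Nat.add_sub_cancel, zero_smul, zero_add, add_zero]
    module

/-- The vanishing of the coefficients of `e (k + 2)`, `e (k - 1)`, `e (k + 1)` and `e k`, in this
order, in `askeyWilsonDefect_apply_splitBasis`, where `φ k = a k * b k` and `e k = 0` for `k > d`.
The convention is `φ 0 = φ (d + 1) = 0`, so the junk value `θ (0 - 1) = θ 0` in `diagonal` is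
multiplied by `0`. -/
structure IsAskeyWilsonArray (d : ℕ) (θ θs φ : ℕ → R) (β γ γs ρ ω η : R) : Prop where
  recurrence : ∀ k, k + 2 ≤ d → θs k - β * θs (k + 1) + θs (k + 2) = γs
  quadratic : ∀ k, k + 1 ≤ d →
    θ k ^ 2 - β * θ k * θ (k + 1) + θ (k + 1) ^ 2 - γ * (θ k + θ (k + 1)) = ρ
  subdiagonal : ∀ k, k + 1 ≤ d →
    (θ k + θ (k + 1)) * (θs k + θs (k + 1)) - β * (θ k * θs k + θ (k + 1) * θs (k + 1)) -
      γ * (θs k + θs (k + 1)) - γs * (θ k + θ (k + 1)) + φ k - β * φ (k + 1) + φ (k + 2) = ω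
  diagonal : ∀ k, k ≤ d →
    2 * θ k ^ 2 * θs k - β * θ k ^ 2 * θs k - 2 * γ * θ k * θs k - ρ * θs k - γs * θ k ^ 2 -
      ω * θ k + φ k * (θ (k - 1) + θ k - β * θ k - γ) +
      φ (k + 1) * (θ k + θ (k + 1) - β * θ k - γ) = η

theorem IsAskeyWilsonArray.askeyWilsonDefect_apply_eq_zero {d : ℕ} {A B : Module.End R V}
    {e : ℕ → V} {θ θs a b : ℕ → R} {β γ γs ρ ω η : R}
    (h : IsAskeyWilsonArray d θ θs (a * b) β γ γs ρ ω η)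
    (hA : ∀ k, A (e k) = θ k • e k + a (k + 1) • e (k + 1))
    (hB : ∀ k, B (e k) = θs k • e k + b k • e (k - 1)) (hb : b 0 = 0)
    (he : ∀ k, d < k → e k = 0) {k : ℕ} (hk : k ≤ d) :
    askeyWilsonDefect A B β γ γs ρ ω η (e k) = 0 := by
  have smul_eq_zero_of_le {c : R} {m : ℕ} (hc : m ≤ d → c = 0) : c • e m = 0 := by
    rcases le_or_gt m d with hm | hm
    · rw [hc hm, zero_smul]
    · rw [he m hm, smul_zero]
  have sum_eq_zero {w x y z : V} (hw : w = 0) (hx : x = 0) (hy : y = 0) (hz : z = 0) :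
      w + x + y + z = 0 := by
    simp only [hw, hx, hy, hz, add_zero]
  rw [askeyWilsonDefect_apply_splitBasis hA hB hb]
  refine sum_eq_zero (smul_eq_zero_of_le fun hk => ?_) (smul_eq_zero_of_le fun hk => ?_)
    (smul_eq_zero_of_le fun hk => ?_) (smul_eq_zero_of_le fun _ => ?_)
  · rw [h.recurrence k hk, sub_self, mul_zero]
  · rw [← h.subdiagonal k hk]
    simp only [Pi.mul_apply, sub_self, mul_zero]
  · rw [← h.diagonal k hk]
    simp only [Pi.mul_apply, sub_self]
  · cases k with
    | zero => rw [hb, zero_mul]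
    | succ k => rw [Nat.add_sub_cancel, h.quadratic k hk, sub_self, mul_zero]

end SplitBasis

section Bidiagonal

variable {R : Type*} [CommRing R] {d : ℕ}

/-- The `k`-th standard basis vector, extended by `0` to `k > d`, so that raising the last basis
vector needs no special case. -/
def extendedBasis (R : Type*) [CommRing R] (d k : ℕ) : Fin (d + 1) → R :=
  fun i => if (i : ℕ) = k then 1 else 0

theorem extendedBasis_val (k : Fin (d + 1)) : extendedBasis R d k = Pi.single k 1 := by
  ext i
  simp only [extendedBasis, Pi.single_apply, Fin.ext_iff]

theorem extendedBasis_eq_zero {k : ℕ} (hk : d < k) : extendedBasis R d k = 0 := by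
  ext i
  simp only [extendedBasis, Pi.zero_apply, ite_eq_right_iff]
  omega

/-- The lower bidiagonal matrix with diagonal `θ 0, …, θ d` and subdiagonal `a 1, …, a d`. -/
def lowerBidiagonal (d : ℕ) (θ a : ℕ → R) : Matrix (Fin (d + 1)) (Fin (d + 1)) R :=
  of fun i j => if (i : ℕ) = j then θ i else if (j : ℕ) + 1 = i then a i else 0

theorem lowerBidiagonal_mulVec_extendedBasis (θ a : ℕ → R) (k : ℕ) :
    lowerBidiagonal d θ a *ᵥ extendedBasis R d k =
      θ k • extendedBasis R d k + a (k + 1) • extendedBasis R d (k + 1) := by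
  rcases Nat.lt_or_ge d k with hk | hk
  · simp [extendedBasis_eq_zero hk, extendedBasis_eq_zero (hk.trans k.lt_succ_self)]
  · lift k to Fin (d + 1) using Nat.lt_succ_of_le hk
    ext i
    rw [extendedBasis_val, mulVec_single_one, ← extendedBasis_val]
    simp only [lowerBidiagonal, extendedBasis, col_apply, of_apply, Pi.add_apply, Pi.smul_apply,
      smul_eq_mul]
    grind

theorem transpose_lowerBidiagonal_mulVec_extendedBasis (θ : ℕ → R) {b : ℕ → R} (hb : b 0 = 0)
    (hb' : b (d + 1) = 0) (k : ℕ) :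
    (lowerBidiagonal d θ b)ᵀ *ᵥ extendedBasis R d k =
      θ k • extendedBasis R d k + b k • extendedBasis R d (k - 1) := by
  rcases Nat.lt_or_ge d k with hk | hk
  · obtain rfl | hk' : k = d + 1 ∨ d < k - 1 := by omega
    · simp [extendedBasis_eq_zero hk, hb']
    · simp [extendedBasis_eq_zero hk, extendedBasis_eq_zero hk']
  · lift k to Fin (d + 1) using Nat.lt_succ_of_le hk
    ext i
    rw [extendedBasis_val, mulVec_single_one, ← extendedBasis_val]
    simp only [lowerBidiagonal, extendedBasis, col_apply, transpose_apply, of_apply, Pi.add_apply,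
      Pi.smul_apply, smul_eq_mul]
    grind

theorem IsAskeyWilsonArray.askeyWilsonDefect_eq_zero {θ θs a b : ℕ → R} {β γ γs ρ ω η : R}
    (h : IsAskeyWilsonArray d θ θs (a * b) β γ γs ρ ω η) (hb : b 0 = 0) (hb' : b (d + 1) = 0) :
    askeyWilsonDefect (lowerBidiagonal d θ a) (lowerBidiagonal d θs b)ᵀ β γ γs ρ ω η = 0 := by
  apply toLinAlgEquiv'.injective
  rw [map_zero, map_askeyWilsonDefect]
  refine LinearMap.pi_ext' fun k => LinearMap.ext_ring ?_
  rw [LinearMap.comp_apply, LinearMap.comp_apply, LinearMap.single_apply, LinearMap.zero_apply,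
    ← extendedBasis_val]
  exact h.askeyWilsonDefect_apply_eq_zero (lowerBidiagonal_mulVec_extendedBasis θ a)
    (transpose_lowerBidiagonal_mulVec_extendedBasis θs hb hb') hb
    (fun _ => extendedBasis_eq_zero) (Nat.le_of_lt_succ k.isLt)

theorem lowerBidiagonal_indicator (θ a : ℕ → R) :
    lowerBidiagonal d θ ((Set.Icc 1 d).indicator a) = lowerBidiagonal d θ a := by
  ext i j
  have hi : (j : ℕ) + 1 = i → (i : ℕ) ∈ Set.Icc 1 d := fun h => ⟨by omega, by omega⟩
  simp only [lowerBidiagonal, of_apply]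
  split_ifs with hdiag hsub
  · rfl
  · exact Set.indicator_of_mem (hi hsub) a
  · rfl

end Bidiagonal

section SplitPair

variable {K : Type*} [Field K] {d : ℕ}

theorem splitPair_fst (θ θs φ : ℕ → K) :
    (splitPair (d := d) θ θs φ).1 = lowerBidiagonal d θ 1 :=
  rfl

theorem splitPair_snd (θ θs φ : ℕ → K) :
    (splitPair (d := d) θ θs φ).2 = (lowerBidiagonal d θs φ)ᵀ := by
  ext i j
  simp only [splitPair, lowerBidiagonal, transpose_apply, of_apply]
  grind

theorem matSatisfiesAW_splitPair {θ θs φ : ℕ → K} {β γ γs ρ ρs ω η ηs : K}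
    (h : IsAskeyWilsonArray d θ θs ((Set.Icc 1 d).indicator φ) β γ γs ρ ω η)
    (hs : IsAskeyWilsonArray d θs θ ((Set.Icc 1 d).indicator φ) β γs γ ρs ω ηs) :
    MatSatisfiesAW (splitPair (d := d) θ θs φ).1 (splitPair (d := d) θ θs φ).2
      β γ γs ρ ρs ω η ηs := by
  have indicator_zero (c : ℕ → K) : (Set.Icc 1 d).indicator c 0 = 0 := by simp
  have indicator_succ (c : ℕ → K) : (Set.Icc 1 d).indicator c (d + 1) = 0 := by simp
  have product : (Set.Icc 1 d).indicator (1 : ℕ → K) * (Set.Icc 1 d).indicator φ =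
      (Set.Icc 1 d).indicator φ := by
    refine (Set.indicator_mul (Set.Icc 1 d) 1 φ).symm.trans ?_
    simp only [Pi.one_apply, one_mul]
  rw [matSatisfiesAW_iff_askeyWilsonDefect_eq_zero, splitPair_fst, splitPair_snd,
    ← lowerBidiagonal_indicator θ, ← lowerBidiagonal_indicator θs]
  constructor
  · rw [← product] at h
    exact h.askeyWilsonDefect_eq_zero (indicator_zero φ) (indicator_succ φ)
  · rw [← product, mul_comm] at hs
    rw [← transpose_eq_zero, transpose_askeyWilsonDefect, transpose_transpose]
    exact hs.askeyWilsonDefect_eq_zero (indicator_zero 1) (indicator_succ 1)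

end SplitPair

theorem isAskeyWilsonArray_orphan {R : Type*} [CommRing R] [CharP R 2] {s ss r : R}
    {θ θs φ : ℕ → R}
    (hθ0 : θ 0 = 0) (hθ1 : θ 1 = s + 1) (hθ2 : θ 2 = 1) (hθ3 : θ 3 = s)
    (hθs0 : θs 0 = 0) (hθs1 : θs 1 = ss + 1) (hθs2 : θs 2 = 1) (hθs3 : θs 3 = ss)
    (hφ0 : φ 0 = 0) (hφ1 : φ 1 = r) (hφ2 : φ 2 = 1) (hφ3 : φ 3 = r + s + ss) (hφ4 : φ 4 = 0) :
    IsAskeyWilsonArray 3 θ θs φ 0 1 1 (s ^ 2 + s) (s * ss) (r * s) := by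
  have two_eq_zero : (2 : R) = 0 := CharTwo.two_eq_zero
  have shift_θs : ∀ k < 2, θs (k + 2) = θs k + 1 := by
    intro k hk
    interval_cases k <;> simp only [hθs0, hθs1, hθs2, hθs3, Nat.reduceAdd] <;> grind
  have sum_θ : ∀ k < 3, θ k + θ (k + 1) = s ∨ θ k + θ (k + 1) = s + 1 := by
    intro k hk
    interval_cases k <;> simp only [hθ0, hθ1, hθ2, hθ3, Nat.reduceAdd] <;> grind
  refine ⟨fun k hk => ?_, fun k (hk : k < 3) => ?_, fun k (hk : k < 3) => ?_, fun k hk => ?_⟩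
  · linear_combination shift_θs k (by omega) + θs k * two_eq_zero
  · rcases sum_θ k hk with hsum | hsum <;> grind
  · interval_cases k <;> simp only [*, Nat.reduceAdd] <;> grind
  · interval_cases k <;> simp only [*, Nat.reduceAdd, Nat.reduceSub] <;> grind

theorem orphan_askey_wilson_general {K : Type*} [Field K] [CharP K 2] (s ss r : K)
    (θ θs φ : ℕ → K)
    (hθ0 : θ 0 = 0) (hθ1 : θ 1 = s + 1) (hθ2 : θ 2 = 1) (hθ3 : θ 3 = s)
    (hθs0 : θs 0 = 0) (hθs1 : θs 1 = ss + 1) (hθs2 : θs 2 = 1) (hθs3 : θs 3 = ss)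
    (hφ1 : φ 1 = r) (hφ2 : φ 2 = 1) (hφ3 : φ 3 = r + s + ss) :
    MatSatisfiesAW (splitPair (d := 3) θ θs φ).1 (splitPair (d := 3) θ θs φ).2
      0 1 1 (s ^ 2 + s) (ss ^ 2 + ss) (s * ss) (r * s) (r * ss) := by
  apply matSatisfiesAW_splitPair
  · apply isAskeyWilsonArray_orphan <;> simp [*]
  · rw [mul_comm s ss]
    apply isAskeyWilsonArray_orphan <;> simp [*, add_right_comm]

/-- Askey–Wilson relations for the orphan split pair in characteristic 2. -/
theorem orphan_askey_wilson
    {K : Type*} [Field K] [IsAlgClosed K] (hchar : ringChar K = 2)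
    (s ss r : K)
    (θ θs φ : ℕ → K)
    (hθ0 : θ 0 = 0) (hθ1 : θ 1 = s + 1) (hθ2 : θ 2 = 1) (hθ3 : θ 3 = s)
    (hθs0 : θs 0 = 0) (hθs1 : θs 1 = ss + 1) (hθs2 : θs 2 = 1) (hθs3 : θs 3 = ss)
    (hφ1 : φ 1 = r) (hφ2 : φ 2 = 1) (hφ3 : φ 3 = r + s + ss) :
    MatSatisfiesAW (splitPair (d := 3) θ θs φ).1 (splitPair (d := 3) θ θs φ).2
      0 1 1 (s ^ 2 + s) (ss ^ 2 + ss) (s * ss) (r * s) (r * ss) := by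
  have : CharP K 2 := ringChar.of_eq hchar
  exact orphan_askey_wilson_general s ss r θ θs φ hθ0 hθ1 hθ2 hθ3 hθs0 hθs1 hθs2 hθs3 hφ1 hφ2 hφ3
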